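/- Let H = ℓ²(ℤ), let U be a unitary operator on H, and let W_1 and W_2 be the weighted bilateral shifts given by W_1 e_j = 2 e_{j+1} for j<0, W_1 e_j = (1/2) e_{j+1} for j≥0, W_2 e_j = 3 e_{j+1} for j<0, W_2 e_j = (1/3) e_{j+1} for j≥0. Let r_1∈ℕ with r_1 ≥ 1 and r_2 = 2r_1, and let T_1 = T_{U,W_1^*} and T_2 = T_{U,W_2^*} act on B(H) (where W_1^*, W_2^* are the Hilbert-space adjoints). Then (T_1^*)^{r_1} and (T_2^*)^{r_2} are d-topologically transitive on B(H)^*, the continuous dual of B(H) with the strong operator topology, endowed with the weak-* topology. -/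

import Mathlib

open scoped Topology
open Filter

noncomputable section

variable {H : Type*} [NormedAddCommGroup H] [InnerProductSpace ℂ H] [CompleteSpace H]

/-- The strong operator topology on `B(H)`: the topology induced by the inclusion of
`B(H)` into `H → H` with the topology of pointwise convergence. -/
def sot (H : Type*) [NormedAddCommGroup H] [InnerProductSpace ℂ H] :
    TopologicalSpace (H →L[ℂ] H) :=
  TopologicalSpace.induced (fun T : H →L[ℂ] H => (T : H → H)) Pi.topologicalSpace

/-- `B(H)^*`: the space of linear functionals on `B(H)` that are continuous for the strong
operator topology. -/
def SOTDual (H : Type*) [NormedAddCommGroup H] [InnerProductSpace ℂ H] : Type _ :=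
  {φ : (H →L[ℂ] H) →ₗ[ℂ] ℂ // Continuous[sot H, inferInstance] φ}

/-- The weak-* topology on `B(H)^*`: the topology of pointwise convergence on `B(H)`. -/
instance (H : Type*) [NormedAddCommGroup H] [InnerProductSpace ℂ H] :
    TopologicalSpace (SOTDual H) :=
  TopologicalSpace.induced (fun φ : SOTDual H => (φ.1 : (H →L[ℂ] H) → ℂ))
    Pi.topologicalSpace

/-- The elementary operator `T_{U,W} : F ↦ W F U` as a bounded operator on `B(H)`. -/
def elem (U W : H →L[ℂ] H) : (H →L[ℂ] H) →L[ℂ] (H →L[ℂ] H) :=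
  ((ContinuousLinearMap.compL ℂ H H H) W).comp
    (((ContinuousLinearMap.compL ℂ H H H)).flip U)

/-- The elementary operator `T_{U,W}` is continuous on `B(H)` for the strong operator
topology. -/
theorem elem_sotContinuous (U W : H →L[ℂ] H) :
    Continuous[sot H, sot H] (elem U W) := by
  letI : TopologicalSpace (H →L[ℂ] H) := sot H
  show Continuous (elem U W)
  refine continuous_induced_rng.2 (continuous_pi fun x => ?_)
  have h1 : Continuous fun F : H →L[ℂ] H => F (U x) :=
    (continuous_apply (U x)).comp continuous_induced_dom
  exact W.continuous.comp h1

/-- The dual `T^*` of the elementary operator `T = T_{U,W}`, acting on `B(H)^*` by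
`(T^* φ)(F) = φ(T F) = φ(W F U)`. -/
def dualElem (U W : H →L[ℂ] H) : SOTDual H → SOTDual H := fun φ =>
  ⟨φ.1.comp (elem U W).toLinearMap, by
    letI : TopologicalSpace (H →L[ℂ] H) := sot H
    exact φ.2.comp (elem_sotContinuous U W)⟩

/-- `IsW e c W` says that `W` is the weighted bilateral shift `e j ↦ c e (j+1)` for `j < 0`
and `e j ↦ c⁻¹ e (j+1)` for `j ≥ 0`, as an invertible bounded operator. -/
def IsW (e : HilbertBasis ℤ ℂ H) (c : ℂ) (W : (H →L[ℂ] H)ˣ) : Prop :=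
  (∀ j : ℤ, j < 0 → (W : H →L[ℂ] H) (e j) = c • e (j + 1)) ∧
  (∀ j : ℤ, 0 ≤ j → (W : H →L[ℂ] H) (e j) = c⁻¹ • e (j + 1))

/-!
Pairs `(W, U)` of an invertible and a unitary operator act on `B(H)^*` by a group action `g • φ`,
`(g • φ) F = φ (W^* F U)`, and each `T_i^*` is the action of `g_i = (W_i, U)`. On functionals
reading finitely many rows of the matrix of `F`, which are weak-* dense, the action of a sequence
in the group tends to `0` as soon as its first components tend to `0` on every basis vector. For
such functionals `x`, `y_1`, `y_2`, and with `h_i = g_i ^ (r_i n)`, the functional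
`x + h_1⁻¹ • y_1 + h_2⁻¹ • y_2` therefore tends to `x` and its image under `h_i` to `y_i` as
`n → ∞`, provided `W_i ^ (r_i n)`, `W_i ^ (-r_i n)` and, for `i ≠ j`,
`W_i ^ (r_i n) W_j ^ (-r_j n)` tend to `0` on every basis vector. The shift with weight `c`
satisfies `‖W ^ k e_j‖ = ‖c‖ ^ (|j| - |j + k|)`, so the last limit amounts to
`‖c_i‖ ^ (r_j - |r_i - r_j|) < ‖c_j‖ ^ r_j`; for the weights `2`, `3` and `r_2 = 2 r_1` this says
`2 ^ r_1 < 9 ^ r_1` and `1 < 2 ^ r_1`.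
-/

open InnerProductSpace ContinuousLinearMap

section DisjointMixing

variable {ι X : Type*} [TopologicalSpace X]

/-- Disjoint topological mixing of a family of sequences of maps `T i n`: for all nonempty open sets
`O` and `V i`, every large `n` admits a point of `O` which each `T i n` maps into `V i`. With
`T i n` the `n`-th iterate of a map, this strengthens d-topological transitivity. -/
def IsDisjointlyMixing (T : ι → ℕ → X → X) : Prop :=
  ∀ ⦃O : Set X⦄ ⦃V : ι → Set X⦄, IsOpen O → (∀ i, IsOpen (V i)) → O.Nonempty →
    (∀ i, (V i).Nonempty) → ∀ᶠ n in atTop, ∃ x ∈ O, ∀ i, T i n x ∈ V i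

theorem IsDisjointlyMixing.exists_mem_and_mem {T : Fin 2 → ℕ → X → X} (hT : IsDisjointlyMixing T)
    {O V₁ V₂ : Set X} (hO : IsOpen O) (hV₁ : IsOpen V₁) (hV₂ : IsOpen V₂) (hO_ne : O.Nonempty)
    (hV₁_ne : V₁.Nonempty) (hV₂_ne : V₂.Nonempty) :
    ∃ n, ∃ x ∈ O, T 0 n x ∈ V₁ ∧ T 1 n x ∈ V₂ := by
  obtain ⟨n, x, hxO, hxV⟩ := (hT (V := ![V₁, V₂]) hO (Fin.forall_fin_two.2 ⟨hV₁, hV₂⟩) hO_ne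
    (Fin.forall_fin_two.2 ⟨hV₁_ne, hV₂_ne⟩)).exists
  exact ⟨n, x, hxO, hxV 0, hxV 1⟩

theorem isDisjointlyMixing_of_dense [Finite ι] [AddCommMonoid X] [ContinuousAdd X] {G : Type*}
    [Group G] (ρ : G →* AddMonoid.End X) (g : ι → ℕ → G) {D : Set X} (hD : Dense D)
    (hg : ∀ i, ∀ x ∈ D, Tendsto (fun n => ρ (g i n) x) atTop (𝓝 0))
    (hg_inv : ∀ i, ∀ x ∈ D, Tendsto (fun n => ρ (g i n)⁻¹ x) atTop (𝓝 0))
    (hg_mul_inv : Pairwise fun i j =>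
      ∀ x ∈ D, Tendsto (fun n => ρ (g i n * (g j n)⁻¹) x) atTop (𝓝 0)) :
    IsDisjointlyMixing fun i n => ⇑(ρ (g i n)) := by
  classical
  cases nonempty_fintype ι
  intro O V hO hV hO_ne hV_ne
  obtain ⟨x, hxO, hxD⟩ := hD.inter_open_nonempty O hO hO_ne
  choose y hyV hyD using fun i => hD.inter_open_nonempty (V i) (hV i) (hV_ne i)
  let z : ℕ → X := fun n => x + ∑ j, ρ (g j n)⁻¹ (y j)
  have hz : Tendsto z atTop (𝓝 x) := by
    simpa only [Finset.sum_const_zero, add_zero] using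
      tendsto_const_nhds.add (tendsto_finsetSum _ fun j _ => hg_inv j _ (hyD j))
  have hg_inv_y (i j : ι) :
      Tendsto (fun n => ρ (g i n * (g j n)⁻¹) (y j)) atTop (𝓝 (if j = i then y j else 0)) := by
    split_ifs with hji
    · simp only [hji, mul_inv_cancel, map_one, AddMonoid.End.coe_one, id_eq, tendsto_const_nhds]
    · exact hg_mul_inv (Ne.symm hji) _ (hyD j)
  have hgz (i : ι) : Tendsto (fun n => ρ (g i n) (z n)) atTop (𝓝 (y i)) := by
    have hsum := (hg i x hxD).add (tendsto_finsetSum Finset.univ fun j _ => hg_inv_y i j)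
    simpa only [z, map_add, map_sum, map_mul, AddMonoid.End.coe_mul, Function.comp_apply,
      Finset.sum_ite_eq', Finset.mem_univ, if_true, zero_add] using hsum
  filter_upwards [hz.eventually_mem (hO.mem_nhds hxO),
    eventually_all.2 fun i => (hgz i).eventually_mem ((hV i).mem_nhds (hyV i))] with n hzn hgzn
  exact ⟨z n, hzn, hgzn⟩

end DisjointMixing

namespace SOTDual

variable {E : Type*} [NormedAddCommGroup E] [InnerProductSpace ℂ E]

/-- The subspace of SOT-continuous functionals inside the algebraic dual of `B(E)`. Its underlying
type is `SOTDual E`, which takes its additive structure from here. -/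
def submodule (E : Type*) [NormedAddCommGroup E] [InnerProductSpace ℂ E] :
    Submodule ℂ ((E →L[ℂ] E) →ₗ[ℂ] ℂ) where
  carrier := {φ | Continuous[sot E, inferInstance] φ}
  zero_mem' := @continuous_const _ _ (sot E) _ _
  add_mem' hφ hψ := @Continuous.add _ _ _ _ _ (sot E) _ _ hφ hψ
  smul_mem' c _ hφ := @Continuous.const_smul _ _ _ _ _ _ (sot E) _ hφ c

instance : AddCommGroup (SOTDual E) := inferInstanceAs (AddCommGroup (submodule E))

/-- The embedding of `B(E)^*` into the functions on `B(E)`, which induces the weak-* topology. -/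
def coeAddHom (E : Type*) [NormedAddCommGroup E] [InnerProductSpace ℂ E] :
    SOTDual E →+ ((E →L[ℂ] E) → ℂ) where
  toFun φ := φ.1
  map_zero' := rfl
  map_add' _ _ := rfl

@[ext]
theorem ext {φ ψ : SOTDual E} (h : ∀ F, φ.1 F = ψ.1 F) : φ = ψ :=
  Subtype.ext (LinearMap.ext h)

theorem zero_apply (F : E →L[ℂ] E) : (0 : SOTDual E).1 F = 0 := rfl

theorem isInducing_coeAddHom : Topology.IsInducing (coeAddHom E) := ⟨rfl⟩

instance : ContinuousAdd (SOTDual E) := continuousAdd_induced (coeAddHom E)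

theorem tendsto_iff {α : Type*} {l : Filter α} {f : α → SOTDual E} {φ : SOTDual E} :
    Tendsto f l (𝓝 φ) ↔ ∀ F, Tendsto (fun n => (f n).1 F) l (𝓝 (φ.1 F)) := by
  rw [isInducing_coeAddHom.tendsto_nhds_iff, tendsto_pi_nhds]
  rfl

theorem hasSum_iff {α : Type*} {f : α → SOTDual E} {φ : SOTDual E} :
    HasSum f φ ↔ ∀ F, HasSum (fun n => (f n).1 F) (φ.1 F) := by
  rw [← isInducing_coeAddHom.hasSum_iff, Pi.hasSum]
  rfl

theorem hasSum_apply {α : Type*} (φ : SOTDual E) {f : α → E →L[ℂ] E} {F : E →L[ℂ] E}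
    (hf : ∀ x, HasSum (fun n => f n x) (F x)) : HasSum (fun n => φ.1 (f n)) (φ.1 F) := by
  let _ : TopologicalSpace (E →L[ℂ] E) := sot E
  have hind : Topology.IsInducing (FunLike.coeAddMonoidHom (E →L[ℂ] E) E E) := ⟨rfl⟩
  have hsum : HasSum f F := (hind.hasSum_iff f F).1 (Pi.hasSum.2 hf)
  exact hsum.map φ.1 φ.2

theorem continuous_norm (φ : SOTDual E) : Continuous φ.1 := by
  have hsot : Continuous[inferInstance, sot E] (id : (E →L[ℂ] E) → E →L[ℂ] E) :=
    continuous_induced_rng.2 (continuous_pi fun x => (apply ℂ E x).continuous)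
  exact @Continuous.comp _ _ _ _ (sot E) _ _ _ φ.2 hsot

end SOTDual

theorem dualElem_apply (U W : H →L[ℂ] H) (φ : SOTDual H) (F : H →L[ℂ] H) :
    (dualElem U W φ).1 F = φ.1 (W * F * U) := rfl

/-- The action `φ ↦ (F ↦ φ (W^* F U))` on `B(H)^*` of pairs `(W, U)` of an invertible and a
unitary operator. The adjoint makes this a homomorphism rather than an antihomomorphism in `W`. -/
def dualElemHom : (H →L[ℂ] H)ˣ × unitary (H →L[ℂ] H) →* AddMonoid.End (SOTDual H) where
  toFun g :=
    { toFun := dualElem (g.2 : H →L[ℂ] H) (star (g.1 : H →L[ℂ] H))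
      map_zero' := rfl
      map_add' := fun _ _ => rfl }
  map_one' := by
    refine AddMonoidHom.ext fun φ => SOTDual.ext fun F => congrArg φ.1 ?_
    change star (1 : H →L[ℂ] H) * F * 1 = F
    rw [star_one, one_mul, mul_one]
  map_mul' g h := by
    refine AddMonoidHom.ext fun φ => SOTDual.ext fun F => congrArg φ.1 ?_
    change star ((g.1 : H →L[ℂ] H) * h.1) * F * ((g.2 : H →L[ℂ] H) * h.2) =
      star (h.1 : H →L[ℂ] H) * (star (g.1 : H →L[ℂ] H) * F * g.2) * h.2
    simp only [star_mul, mul_assoc]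

theorem dualElemHom_apply (g : (H →L[ℂ] H)ˣ × unitary (H →L[ℂ] H)) (φ : SOTDual H)
    (F : H →L[ℂ] H) : (dualElemHom g φ).1 F = φ.1 (star (g.1 : H →L[ℂ] H) * F * g.2) := rfl

theorem coe_dualElemHom_pow (W : (H →L[ℂ] H)ˣ) (U : unitary (H →L[ℂ] H)) (n : ℕ) :
    ⇑(dualElemHom ((W, U) ^ n)) = (dualElem (U : H →L[ℂ] H) (adjoint (W : H →L[ℂ] H)))^[n] := by
  rw [map_pow, AddMonoid.End.coe_pow]
  rfl

section HilbertBasis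

variable {κ : Type*} (e : HilbertBasis κ ℂ H)

/-- The functional `F ↦ φ (P F)`, where `P` is the orthogonal projection onto the line spanned by
`e k`. It depends only on the `k`-th row of the matrix of `F`. -/
def rowFunctional (k : κ) (φ : SOTDual H) : SOTDual H := dualElem 1 (rankOne ℂ (e k) (e k)) φ

theorem hasSum_rowFunctional (φ : SOTDual H) : HasSum (fun k => rowFunctional e k φ) φ := by
  refine SOTDual.hasSum_iff.2 fun F => φ.hasSum_apply fun x => ?_
  simpa only [HilbertBasis.repr_apply_apply] using! e.hasSum_repr (F x)

theorem dense_closure_range_rowFunctional :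
    Dense (AddSubmonoid.closure (⋃ k, Set.range (rowFunctional e k)) : Set (SOTDual H)) :=
  fun φ => mem_closure_of_tendsto (hasSum_rowFunctional e φ) <| .of_forall fun _ =>
    sum_mem fun k _ => AddSubmonoid.subset_closure (Set.mem_iUnion.2 ⟨k, φ, rfl⟩)

theorem dualElemHom_rowFunctional_apply (g : (H →L[ℂ] H)ˣ × unitary (H →L[ℂ] H)) (k : κ)
    (φ : SOTDual H) (F : H →L[ℂ] H) :
    (dualElemHom g (rowFunctional e k φ)).1 F =
      φ.1 (rankOne ℂ (e k) ((g.1 : H →L[ℂ] H) (e k)) * F * g.2) := by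
  have hrank : rankOne ℂ (e k) (e k) * star (g.1 : H →L[ℂ] H) =
      rankOne ℂ (e k) ((g.1 : H →L[ℂ] H) (e k)) := by
    rw [star_eq_adjoint, mul_def, rankOne_comp, adjoint_adjoint]
  rw [dualElemHom_apply, rowFunctional, dualElem_apply, mul_one, ← hrank]
  simp only [mul_assoc]

variable {e}

theorem tendsto_dualElemHom_rowFunctional {α : Type*} {l : Filter α}
    {g : α → (H →L[ℂ] H)ˣ × unitary (H →L[ℂ] H)} {k : κ}
    (hg : Tendsto (fun n => ((g n).1 : H →L[ℂ] H) (e k)) l (𝓝 0)) (φ : SOTDual H) :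
    Tendsto (fun n => dualElemHom (g n) (rowFunctional e k φ)) l (𝓝 0) := by
  refine SOTDual.tendsto_iff.2 fun F => ?_
  have hrow : Tendsto (fun n => rankOne ℂ (e k) (((g n).1 : H →L[ℂ] H) (e k)) * F) l (𝓝 0) := by
    simpa only [map_zero, zero_mul, Function.comp_def] using
      (((rankOne ℂ (e k)).continuous.tendsto 0).comp hg).mul_const F
  have hrow_unitary : Tendsto
      (fun n => rankOne ℂ (e k) (((g n).1 : H →L[ℂ] H) (e k)) * F * (g n).2) l (𝓝 0) := by
    refine squeeze_zero_norm (fun n => ?_) (tendsto_zero_iff_norm_tendsto_zero.1 hrow)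
    exact (CStarRing.norm_mul_coe_unitary _ _).le
  simpa only [dualElemHom_rowFunctional_apply, map_zero, SOTDual.zero_apply,
    Function.comp_def] using (φ.continuous_norm.tendsto 0).comp hrow_unitary

theorem tendsto_dualElemHom_of_mem_closure {α : Type*} {l : Filter α}
    {g : α → (H →L[ℂ] H)ˣ × unitary (H →L[ℂ] H)}
    (hg : ∀ k, Tendsto (fun n => ((g n).1 : H →L[ℂ] H) (e k)) l (𝓝 0)) {φ : SOTDual H}
    (hφ : φ ∈ AddSubmonoid.closure (⋃ k, Set.range (rowFunctional e k))) :
    Tendsto (fun n => dualElemHom (g n) φ) l (𝓝 0) := by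
  induction hφ using AddSubmonoid.closure_induction with
  | mem φ hφ =>
    obtain ⟨k, ψ, rfl⟩ := Set.mem_iUnion.1 hφ
    exact tendsto_dualElemHom_rowFunctional (hg k) ψ
  | zero => simp only [map_zero, tendsto_const_nhds]
  | add φ ψ _ _ hφ hψ => simpa only [map_add, add_zero] using hφ.add hψ

theorem isDisjointlyMixing_dualElemHom {ι : Type*} [Finite ι]
    {g : ι → ℕ → (H →L[ℂ] H)ˣ × unitary (H →L[ℂ] H)}
    (hg : ∀ i k, Tendsto (fun n => ((g i n).1 : H →L[ℂ] H) (e k)) atTop (𝓝 0))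
    (hg_inv : ∀ i k, Tendsto (fun n => (↑(g i n)⁻¹.1 : H →L[ℂ] H) (e k)) atTop (𝓝 0))
    (hg_mul_inv : Pairwise fun i j =>
      ∀ k, Tendsto (fun n => (↑(g i n * (g j n)⁻¹).1 : H →L[ℂ] H) (e k)) atTop (𝓝 0)) :
    IsDisjointlyMixing fun i n => ⇑(dualElemHom (g i n)) :=
  isDisjointlyMixing_of_dense dualElemHom g (dense_closure_range_rowFunctional e)
    (fun i _ hφ => tendsto_dualElemHom_of_mem_closure (hg i) hφ)
    (fun i _ hφ => tendsto_dualElemHom_of_mem_closure (hg_inv i) hφ)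
    (fun _ _ hij _ hφ => tendsto_dualElemHom_of_mem_closure (hg_mul_inv hij) hφ)

end HilbertBasis

namespace IsW

variable {E : Type*} [NormedAddCommGroup E] [InnerProductSpace ℂ E] {e : HilbertBasis ℤ ℂ E}
  {c d : ℂ} {W X : (E →L[ℂ] E)ˣ}

theorem apply (hW : IsW e c W) (j : ℤ) :
    (W : E →L[ℂ] E) (e j) = c ^ (|j| - |j + 1|) • e (j + 1) := by
  rcases lt_or_ge j 0 with hj | hj
  · rw [hW.1 j hj, abs_of_neg hj, abs_of_nonpos (by omega), show -j - -(j + 1) = 1 by ring,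
      zpow_one]
  · rw [hW.2 j hj, abs_of_nonneg hj, abs_of_nonneg (by omega), show j - (j + 1) = -1 by ring,
      zpow_neg_one]

theorem inv_apply (hW : IsW e c W) (hc : c ≠ 0) (j : ℤ) :
    (↑W⁻¹ : E →L[ℂ] E) (e j) = c ^ (|j| - |j - 1|) • e (j - 1) := by
  have hWe : (W : E →L[ℂ] E) (c ^ (|j| - |j - 1|) • e (j - 1)) = e j := by
    rw [map_smul, hW.apply, smul_smul, ← zpow_add₀ hc, sub_add_cancel, sub_add_sub_cancel,
      sub_self, zpow_zero, one_smul]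
  rw [← hWe, ← mul_apply_eq_comp, Units.inv_mul]
  simp

theorem zpow_apply (hW : IsW e c W) (hc : c ≠ 0) (k j : ℤ) :
    (↑(W ^ k) : E →L[ℂ] E) (e j) = c ^ (|j| - |j + k|) • e (j + k) := by
  induction k with
  | zero => simp
  | succ k ih =>
    rw [add_comm, zpow_one_add, Units.val_mul, mul_apply_eq_comp, ih, map_smul,
      hW.apply, smul_smul, ← zpow_add₀ hc, sub_add_sub_cancel, add_comm 1, add_assoc]
  | pred k ih =>
    rw [← add_sub_assoc, sub_eq_neg_add _ 1, zpow_add, zpow_neg_one, Units.val_mul,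
      mul_apply_eq_comp, ih, map_smul, hW.inv_apply hc, smul_smul, ← zpow_add₀ hc,
      sub_add_sub_cancel]

theorem norm_zpow_apply (hW : IsW e c W) (hc : c ≠ 0) (k j : ℤ) :
    ‖(↑(W ^ k) : E →L[ℂ] E) (e j)‖ = ‖c‖ ^ (|j| - |j + k|) := by
  rw [hW.zpow_apply hc, norm_smul, norm_zpow, e.orthonormal.1, mul_one]

theorem norm_zpow_mul_zpow_apply (hW : IsW e c W) (hX : IsW e d X) (hc : c ≠ 0) (hd : d ≠ 0)
    (k l j : ℤ) :
    ‖(↑(W ^ k * X ^ l) : E →L[ℂ] E) (e j)‖ =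
      ‖d‖ ^ (|j| - |j + l|) * ‖c‖ ^ (|j + l| - |j + l + k|) := by
  rw [Units.val_mul, mul_apply_eq_comp, hX.zpow_apply hd, map_smul, norm_smul,
    hW.norm_zpow_apply hc, norm_zpow]

theorem norm_zpow_mul_zpow_apply_le (hW : IsW e c W) (hX : IsW e d X) (hc : 1 ≤ ‖c‖)
    (hd : 1 ≤ ‖d‖) (k l j : ℤ) :
    ‖(↑(W ^ k * X ^ l) : E →L[ℂ] E) (e j)‖ ≤
      ‖d‖ ^ (2 * |j|) * ‖c‖ ^ (2 * |j|) * (‖c‖ ^ (|l| - |k + l|) / ‖d‖ ^ |l|) := by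
  have hc₀ : 0 < ‖c‖ := zero_lt_one.trans_le hc
  have hd₀ : 0 < ‖d‖ := zero_lt_one.trans_le hd
  have hXexp : |j| - |j + l| ≤ 2 * |j| - |l| := by
    grind [abs_add_le (j + l) (-j)]
  have hWexp : |j + l| - |j + l + k| ≤ 2 * |j| + (|l| - |k + l|) := by
    grind [abs_add_le j l, abs_add_le (j + l + k) (-j)]
  calc ‖(↑(W ^ k * X ^ l) : E →L[ℂ] E) (e j)‖
      = ‖d‖ ^ (|j| - |j + l|) * ‖c‖ ^ (|j + l| - |j + l + k|) :=
        hW.norm_zpow_mul_zpow_apply hX (norm_pos_iff.1 hc₀) (norm_pos_iff.1 hd₀) k l j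
    _ ≤ ‖d‖ ^ (2 * |j| - |l|) * ‖c‖ ^ (2 * |j| + (|l| - |k + l|)) := by gcongr
    _ = ‖d‖ ^ (2 * |j|) * ‖c‖ ^ (2 * |j|) * (‖c‖ ^ (|l| - |k + l|) / ‖d‖ ^ |l|) := by
      rw [zpow_sub₀ hd₀.ne', zpow_add₀ hc₀.ne']
      ring

theorem tendsto_zpow_mul_zpow (hW : IsW e c W) (hX : IsW e d X) (hc : 1 ≤ ‖c‖) (hd : 1 ≤ ‖d‖)
    {a b : ℤ} (hab : ‖c‖ ^ (|b| - |a + b|) < ‖d‖ ^ |b|) (j : ℤ) :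
    Tendsto (fun n : ℕ => (↑(W ^ (a * n) * X ^ (b * n)) : E →L[ℂ] E) (e j)) atTop (𝓝 0) := by
  have hratio : ‖c‖ ^ (|b| - |a + b|) / ‖d‖ ^ |b| < 1 :=
    (div_lt_one (zpow_pos (zero_lt_one.trans_le hd) _)).2 hab
  have hgeom := (tendsto_pow_atTop_nhds_zero_of_lt_one (by positivity) hratio).const_mul
    (‖d‖ ^ (2 * |j|) * ‖c‖ ^ (2 * |j|))
  rw [mul_zero] at hgeom
  refine squeeze_zero_norm (fun n => ?_) hgeom
  convert hW.norm_zpow_mul_zpow_apply_le hX hc hd (a * n) (b * n) j using 2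
  rw [div_pow, ← zpow_natCast, ← zpow_natCast, ← zpow_mul, ← zpow_mul, ← add_mul, abs_mul, abs_mul,
    Nat.abs_cast, sub_mul]

theorem tendsto_zpow (hW : IsW e c W) (hc : 1 < ‖c‖) {a : ℤ} (ha : a ≠ 0) (j : ℤ) :
    Tendsto (fun n : ℕ => (↑(W ^ (a * n)) : E →L[ℂ] E) (e j)) atTop (𝓝 0) := by
  have ha' : ‖c‖ ^ (|0| - |a + 0|) < ‖c‖ ^ |(0 : ℤ)| := by
    simpa using zpow_lt_zpow_right₀ hc (neg_lt_zero.2 (abs_pos.2 ha))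
  simpa using hW.tendsto_zpow_mul_zpow hW hc.le hc.le ha' j

end IsW

theorem pairwise_zpow_norm_lt {c d : ℂ} (hc : 1 < ‖c‖) (hcd : ‖c‖ < ‖d‖ ^ 2) {r : ℕ} (hr : 0 < r) :
    Pairwise fun i j : Fin 2 =>
      ‖![c, d] i‖ ^ (![r, 2 * r] j - |(![r, 2 * r] i - ![r, 2 * r] j : ℤ)|) <
        ‖![c, d] j‖ ^ ![r, 2 * r] j := by
  have h₀₁ : ‖c‖ ^ ((2 * r : ℕ) - |(r - (2 * r : ℕ) : ℤ)|) < ‖d‖ ^ (2 * r) := by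
    rw [show ((2 * r : ℕ) - |(r - (2 * r : ℕ) : ℤ)|) = r by grind, zpow_natCast, pow_mul]
    exact pow_lt_pow_left₀ hcd (norm_nonneg c) hr.ne'
  have h₁₀ : ‖d‖ ^ (r - |((2 * r : ℕ) - r : ℤ)|) < ‖c‖ ^ r := by
    rw [show (r - |((2 * r : ℕ) - r : ℤ)|) = 0 by grind, zpow_zero]
    exact one_lt_pow₀ hc hr.ne'
  intro i j hij
  fin_cases i <;> fin_cases j
  exacts [(hij rfl).elim, h₀₁, h₁₀, (hij rfl).elim]

theorem stmt17_general {ι : Type*} [Finite ι] (e : HilbertBasis ℤ ℂ H)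
    (U : ι → unitary (H →L[ℂ] H)) {W : ι → (H →L[ℂ] H)ˣ} {c : ι → ℂ} {r : ι → ℕ}
    (hW : ∀ i, IsW e (c i) (W i)) (hc : ∀ i, 1 < ‖c i‖) (hr : ∀ i, 0 < r i)
    (hcr : Pairwise fun i j => ‖c i‖ ^ (r j - |(r i - r j : ℤ)|) < ‖c j‖ ^ r j) :
    IsDisjointlyMixing fun i n =>
      ((dualElem (U i : H →L[ℂ] H) (adjoint (W i : H →L[ℂ] H)))^[r i])^[n] := by
  have hr' (i : ι) : (r i : ℤ) ≠ 0 := Nat.cast_ne_zero.2 (hr i).ne'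
  have hzpow (i : ι) (n : ℕ) : W i ^ (r i * n) = W i ^ (r i * n : ℤ) := mod_cast rfl
  have hmix : IsDisjointlyMixing fun i n => ⇑(dualElemHom ((W i, U i) ^ (r i * n))) := by
    refine isDisjointlyMixing_dualElemHom (e := e) (fun i k => ?_) (fun i k => ?_)
      fun i j hij k => ?_
    · simpa only [Prod.pow_fst, hzpow] using (hW i).tendsto_zpow (hc i) (hr' i) k
    · simpa only [Prod.fst_inv, Prod.pow_fst, hzpow, neg_mul, zpow_neg] using
        (hW i).tendsto_zpow (hc i) (neg_ne_zero.2 (hr' i)) k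
    · have hcr' : ‖c i‖ ^ (|(-r j : ℤ)| - |(r i + -r j : ℤ)|) < ‖c j‖ ^ |(-r j : ℤ)| := by
        rw [abs_neg, Nat.abs_cast, ← sub_eq_add_neg, zpow_natCast]
        exact hcr hij
      simpa only [Prod.fst_mul, Prod.fst_inv, Prod.pow_fst, hzpow, neg_mul, zpow_neg] using
        (hW i).tendsto_zpow_mul_zpow (hW j) (hc i).le (hc j).le hcr' k
  simpa only [coe_dualElemHom_pow, Function.iterate_mul] using hmix

/-- With `H = ℓ²(ℤ)` (a Hilbert space with orthonormal basis `{e j}_{j ∈ ℤ}`), `U` a unitary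
operator on `H`, `W₁, W₂` the weighted bilateral shifts above, `r₂ = 2r₁`, and
`T₁ = T_{U,W₁^*}`, `T₂ = T_{U,W₂^*}` acting on `B(H)`, the dual operators `(T₁^*)^{r₁}` and
`(T₂^*)^{r₂}` are d-topologically transitive on `B(H)^*`. -/
theorem stmt17 (e : HilbertBasis ℤ ℂ H) (U : H →L[ℂ] H) (hU : U ∈ unitary (H →L[ℂ] H))
    (W₁ W₂ : (H →L[ℂ] H)ˣ) (hW₁ : IsW e (2 : ℂ) W₁) (hW₂ : IsW e (3 : ℂ) W₂)
    (r₁ r₂ : ℕ) (hr₁ : 1 ≤ r₁) (hr₂ : r₂ = 2 * r₁) :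
    ∀ O V₁ V₂ : Set (SOTDual H),
      IsOpen O → IsOpen V₁ → IsOpen V₂ → O.Nonempty → V₁.Nonempty → V₂.Nonempty →
      ∃ n : ℕ, ∃ φ ∈ O,
        ((dualElem U (ContinuousLinearMap.adjoint (W₁ : H →L[ℂ] H)))^[r₁])^[n] φ ∈ V₁ ∧
        ((dualElem U (ContinuousLinearMap.adjoint (W₂ : H →L[ℂ] H)))^[r₂])^[n] φ ∈ V₂ := by
  subst hr₂
  exact fun _ _ _ => (stmt17_general e (fun _ => ⟨U, hU⟩) (W := ![W₁, W₂]) (c := ![2, 3])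
    (r := ![r₁, 2 * r₁]) (Fin.forall_fin_two.2 ⟨hW₁, hW₂⟩) (by simp [Fin.forall_fin_two])
    (Fin.forall_fin_two.2 ⟨hr₁, Nat.mul_pos two_pos hr₁⟩)
    (pairwise_zpow_norm_lt (by simp) (by norm_num) hr₁)).exists_mem_and_mem

end
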